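/- Let s = D(z, d) ∩ R be a proper cluster (|s| ≥ 2) with s ≠ R, let μ(s) = min{v(x − y) : x, y ∈ s, x ≠ y}, let a, b ∈ s with v(a − b) = μ(s), and let c ∈ R \ s. Then D(a, v(a − b)) ∩ R = s and v(a − c) = v(b − c) < v(a − b); in particular (a, b, c) is an ordered triple with Φ((a, b, c)) = s, so every proper non-maximal cluster lies in the image of Φ. -/

import Mathlib

/-!
By the ultrametric inequality any two points of `D(z, d)` are at valuation at least `d`, so
`d ≤ v (a - b)`, and hence `D(a, v (a - b)) ⊆ D(a, d) = D(z, d)`; conversely minimality of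
`v (a - b)` puts `s` inside `D(a, v (a - b))`. As `c ∈ R` lies outside `s`, this equality gives
`v (a - c) < v (a - b)`, and the isosceles property then forces `v (b - c) = v (a - c)`.
-/

/-- A normalized (surjective) additive discrete valuation on a field `K`,
with `v 0 = ⊤` and `v (K^×) = ℤ`. -/
def IsDiscreteAddValuation {K : Type*} [Field K] (v : K → WithTop ℤ) : Prop :=
  v 0 = ⊤ ∧ (∀ x : K, x ≠ 0 → v x ≠ ⊤) ∧ (∀ x y : K, v (x * y) = v x + v y) ∧
    (∀ x y : K, min (v x) (v y) ≤ v (x + y)) ∧ (∀ n : ℤ, ∃ x : K, v x = (n : WithTop ℤ))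

/-- The disc `D(z, d) = {x ∈ K : v(x − z) ≥ d}`. -/
def disc {K : Type*} [Field K] (v : K → WithTop ℤ) (z : K) (d : WithTop ℤ) : Set K :=
  {x : K | d ≤ v (x - z)}

theorem IsDiscreteAddValuation.map_neg {K : Type*} [Field K] {v : K → WithTop ℤ}
    (hv : IsDiscreteAddValuation v) (x : K) : v (-x) = v x := by
  obtain ⟨-, hfin, hmul, -, -⟩ := hv
  have h1 : v 1 = 0 := by
    have h := hmul 1 1
    rw [mul_one] at h
    obtain ⟨n, hn⟩ := WithTop.ne_top_iff_exists.mp (hfin 1 one_ne_zero)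
    rw [← hn] at h ⊢
    norm_cast at h ⊢
    omega
  have h2 : v (-1) = 0 := by
    have h := hmul (-1) (-1)
    rw [neg_mul_neg, mul_one, h1] at h
    obtain ⟨n, hn⟩ := WithTop.ne_top_iff_exists.mp (hfin (-1) (neg_ne_zero.mpr one_ne_zero))
    rw [← hn] at h ⊢
    norm_cast at h ⊢
    omega
  rw [← neg_one_mul, hmul, h2, zero_add]

theorem IsDiscreteAddValuation.map_sub_comm {K : Type*} [Field K] {v : K → WithTop ℤ}
    (hv : IsDiscreteAddValuation v) (x y : K) : v (x - y) = v (y - x) := by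
  rw [← hv.map_neg (x - y), neg_sub]

theorem IsDiscreteAddValuation.min_le_map_sub {K : Type*} [Field K] {v : K → WithTop ℤ}
    (hv : IsDiscreteAddValuation v) (x y w : K) :
    min (v (x - y)) (v (y - w)) ≤ v (x - w) := by
  have h := hv.2.2.2.1 (x - y) (y - w)
  rwa [sub_add_sub_cancel] at h

/-- Every proper non-maximal cluster lies in the image of `Φ`: if `s = D(z, d) ∩ R` is a
proper cluster with `s ≠ R`, `a, b ∈ s` realize the diameter
`μ(s) = min{v(x − y) : x, y ∈ s, x ≠ y} = v(a − b)`, and `c ∈ R \ s`, then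
`D(a, v(a − b)) ∩ R = s` and `v(a − c) = v(b − c) < v(a − b)`; in particular
`(a, b, c)` is an ordered triple with `Φ((a, b, c)) = s`. -/
theorem proper_nonmaximal_cluster_in_image_of_Phi {K : Type*} [Field K]
    (v : K → WithTop ℤ) (hv : IsDiscreteAddValuation v) (R : Finset K)
    (z : K) (d : ℤ) (s : Set K) (hs : s = disc v z (d : WithTop ℤ) ∩ ↑R)
    (hsR : s ≠ ↑R)
    (a b : K) (ha : a ∈ s) (hb : b ∈ s) (hab : a ≠ b)
    (hmin : ∀ x ∈ s, ∀ y ∈ s, x ≠ y → v (a - b) ≤ v (x - y))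
    (c : K) (hcR : c ∈ R) (hcs : c ∉ s) :
    disc v a (v (a - b)) ∩ ↑R = s ∧ v (a - c) = v (b - c) ∧ v (b - c) < v (a - b) := by
  have haz : (d : WithTop ℤ) ≤ v (a - z) := by rw [hs] at ha; exact ha.1
  have hbz : (d : WithTop ℤ) ≤ v (b - z) := by rw [hs] at hb; exact hb.1
  have hdab : (d : WithTop ℤ) ≤ v (a - b) :=
    (le_min haz (hv.map_sub_comm b z ▸ hbz)).trans (hv.min_le_map_sub a z b)
  have hdisc : disc v a (v (a - b)) ∩ ↑R = s := by
    ext x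
    constructor
    · rintro ⟨hx, hxR⟩
      rw [hs]
      exact ⟨(le_min (hdab.trans hx) haz).trans (hv.min_le_map_sub x a z), hxR⟩
    · intro hx
      refine ⟨?_, (hs ▸ hx : x ∈ disc v z (d : WithTop ℤ) ∩ ↑R).2⟩
      change v (a - b) ≤ v (x - a)
      by_cases hxa : x = a
      · rw [hxa, sub_self, hv.1]
        exact le_top
      · exact hmin x hx a ha hxa
  have hac : v (a - c) < v (a - b) := by
    rw [hv.map_sub_comm a c]
    by_contra h
    exact hcs (hdisc ▸ ⟨not_lt.mp h, hcR⟩)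
  have heq : v (a - c) = v (b - c) := by
    apply le_antisymm
    · have h := hv.min_le_map_sub b a c
      rwa [hv.map_sub_comm b a, min_eq_right hac.le] at h
    · rcases min_le_iff.mp (hv.min_le_map_sub a b c) with h | h
      · exact absurd h (not_le.mpr hac)
      · exact h
  exact ⟨hdisc, heq, heq ▸ hac⟩
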